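/- arXiv:1707.07629 — 11 statements merged into one kernel-verified Lean document; each statement's English description precedes it below -/
import Mathlib

section
/- Let M be an r×c integer matrix of rank r with r ≤ c. Then there exists a c×c unimodular integer matrix U such that MU is in right Hermite normal form, i.e. writing H = MU one has H i j = 0 for all j > i, H i i > 0 for all i, and 0 ≤ H i j < H i i for all j < i. -/
open Matrix

/-- An `n × n` integer matrix is unimodular if its determinant is `1` or `-1`. -/
def Unimodular {n : ℕ} (U : Matrix (Fin n) (Fin n) ℤ) : Prop :=
  U.det = 1 ∨ U.det = -1

/-- An `r × c` integer matrix (`r ≤ c`) is in right Hermite normal form: entries above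
the diagonal are zero, diagonal entries are positive, and entries to the left of the
diagonal are nonnegative and smaller than the diagonal entry of their row. -/
def RHNF {r c : ℕ} (hrc : r ≤ c) (H : Matrix (Fin r) (Fin c) ℤ) : Prop :=
  (∀ (i : Fin r) (j : Fin c), (i : ℕ) < (j : ℕ) → H i j = 0) ∧
  (∀ i : Fin r, 0 < H i (Fin.castLE hrc i)) ∧
  (∀ (i : Fin r) (j : Fin c), (j : ℕ) < (i : ℕ) →
    0 ≤ H i j ∧ H i j < H i (Fin.castLE hrc i))

def PartialHNF {r c : ℕ} (hrc : r ≤ c) (k : ℕ) (H : Matrix (Fin r) (Fin c) ℤ) : Prop :=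
  ∀ i : Fin r, (i : ℕ) < k →
    (∀ j : Fin c, (i : ℕ) < (j : ℕ) → H i j = 0) ∧ 0 < H i (Fin.castLE hrc i) ∧
    (∀ j : Fin c, (j : ℕ) < (i : ℕ) → 0 ≤ H i j ∧ H i j < H i (Fin.castLE hrc i))

theorem Unimodular.mul {n : ℕ} {U V : Matrix (Fin n) (Fin n) ℤ} (hU : Unimodular U)
    (hV : Unimodular V) : Unimodular (U * V) := by
  unfold Unimodular at *
  rw [Matrix.det_mul]
  rcases hU with h | h <;> rcases hV with h' | h' <;> simp [h, h']

theorem rank_nullity_int {r : ℕ} (f : (Fin r → ℤ) →ₗ[ℤ] ℤ) :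
    Module.finrank ℤ (LinearMap.range f) + Module.finrank ℤ (LinearMap.ker f)
      = Module.finrank ℤ (Fin r → ℤ) := by
  rw [← f.quotKerEquivRange.finrank_eq]
  exact Submodule.finrank_quotient_add_finrank _

theorem rank_contra {r c : ℕ} (H : Matrix (Fin r) (Fin c) ℤ)
    (hrank : H.rank = r) (v : Fin r → ℤ) (hv : v ≠ 0) (h : v ᵥ* H = 0) : False := by
  let f : (Fin r → ℤ) →ₗ[ℤ] ℤ := dotProductBilin ℤ ℤ v
  have hle : LinearMap.range H.mulVecLin ≤ LinearMap.ker f := by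
    rintro _ ⟨x, rfl⟩
    change v ⬝ᵥ (H *ᵥ x) = 0
    rw [Matrix.dotProduct_mulVec, h, zero_dotProduct]
  have h1 : r ≤ Module.finrank ℤ (LinearMap.ker f) := by
    exact hrank.symm.le.trans (Submodule.finrank_mono hle)
  have h2 := rank_nullity_int f
  rw [Module.finrank_fin_fun] at h2
  have h3 : Module.finrank ℤ (LinearMap.range f) = 0 := by omega
  rw [Submodule.finrank_eq_zero] at h3
  have h4 : f = 0 := LinearMap.range_eq_bot.1 h3
  apply hv
  funext i
  have := LinearMap.congr_fun h4 (Pi.single i 1)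
  change v ⬝ᵥ (Pi.single i 1) = 0 at this
  simpa using this

theorem exists_pivot {r c : ℕ} (hrc : r ≤ c) (H : Matrix (Fin r) (Fin c) ℤ)
    (hrank : H.rank = r) (k : Fin r) (hP : PartialHNF hrc k H) :
    ∃ j : Fin c, (k : ℕ) ≤ j ∧ H k j ≠ 0 := by
  by_contra! hz
  let B : Matrix (Fin r) (Fin r) ℤ := fun i j =>
    if i ≤ k then H i (Fin.castLE hrc j) else if i = j then 1 else 0
  have hB : B.det = 0 := by
    rw [Matrix.det_of_lowerTriangular]
    · apply Finset.prod_eq_zero (Finset.mem_univ k)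
      simp only [B, le_refl, if_true]
      exact hz _ (by simp)
    · intro i j hij
      have hij : i < j := hij
      simp only [B]
      split_ifs with h1 h2
      · rcases h1.lt_or_eq with h | h
        · exact (hP i h).1 _ hij
        · subst h
          exact hz _ hij.le
      · exact absurd h2 hij.ne
      · rfl
  obtain ⟨v, hv, hvB⟩ := Matrix.exists_vecMul_eq_zero_iff.2 hB
  have h0 : ∀ (i : Fin r) (j : Fin c), i ≤ k → (k : ℕ) ≤ j → H i j = 0 := by
    intro i j hi hj
    rcases hi.lt_or_eq with h | h
    · exact (hP i h).1 _ (lt_of_lt_of_le h hj)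
    · subst h
      exact hz _ hj
  have hv0 : ∀ j : Fin r, k < j → v j = 0 := by
    intro j hj
    have := congrFun hvB j
    simp only [Matrix.vecMul, dotProduct, Pi.zero_apply] at this
    rw [Finset.sum_eq_single j] at this
    · simpa [B, not_le.2 hj] using this
    · intro i _ hij
      simp only [B]
      split_ifs with h1
      · rw [h0 i _ h1 hj.le, mul_zero]
      · simp
    · simp
  refine rank_contra H hrank v hv ?_
  funext j
  simp only [Matrix.vecMul, dotProduct, Pi.zero_apply]
  by_cases hj : (k : ℕ) ≤ j
  · apply Finset.sum_eq_zero
    intro i _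
    rcases le_or_gt i k with h | h
    · rw [h0 i j h hj, mul_zero]
    · rw [hv0 i h, zero_mul]
  · have hjr : (j : ℕ) < r := by omega
    have := congrFun hvB ⟨j, hjr⟩
    simp only [Matrix.vecMul, dotProduct, Pi.zero_apply] at this
    rw [← this]
    apply Finset.sum_congr rfl
    intro i _
    rcases le_or_gt i k with h | h
    · simp only [B, h, if_true]
      rfl
    · rw [hv0 i h, zero_mul, zero_mul]

theorem swap_op {r c : ℕ} (hrc : r ≤ c) (H : Matrix (Fin r) (Fin c) ℤ) (k : Fin r)
    (hP : PartialHNF hrc k H) (j : Fin c) (hj : (k : ℕ) ≤ j) :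
    ∃ V : Matrix (Fin c) (Fin c) ℤ, Unimodular V ∧ PartialHNF hrc k (H * V) ∧
      (H * V) k (Fin.castLE hrc k) = H k j := by
  let σ := Equiv.swap (Fin.castLE hrc k) j
  have hmul : H * ((1 : Matrix (Fin c) (Fin c) ℤ).submatrix id σ) = H.submatrix id σ := by
    ext a b
    simp [Matrix.mul_apply, Matrix.one_apply]
  refine ⟨(1 : Matrix (Fin c) (Fin c) ℤ).submatrix id σ, ?_, ?_, ?_⟩
  · unfold Unimodular
    rw [Matrix.det_permute']
    rcases Int.units_eq_one_or (Equiv.Perm.sign σ) with h | h <;> simp [h]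
  · rw [hmul]
    intro i hi
    obtain ⟨h1, h2, h3⟩ := hP i hi
    have hs : ∀ l : Fin c, (l : ℕ) < k → σ l = l := by
      intro l hl
      apply Equiv.swap_apply_of_ne_of_ne
      · rintro rfl
        simp at hl
      · rintro rfl
        omega
    simp only [Matrix.submatrix_apply, id]
    refine ⟨?_, ?_, ?_⟩
    · intro l hl
      apply h1
      simp only [σ, Equiv.swap_apply_def]
      split_ifs
      · omega
      · simpa using hi
      · exact hl
    · rwa [hs _ (by simpa using hi)]
    · intro l hl
      rw [hs (Fin.castLE hrc i) (by simpa using hi), hs l (by omega)]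
      exact h3 l hl
  · rw [hmul]
    simp [σ]

theorem neg_op {r c : ℕ} (hrc : r ≤ c) (H : Matrix (Fin r) (Fin c) ℤ) (k : Fin r)
    (hP : PartialHNF hrc k H) :
    ∃ V : Matrix (Fin c) (Fin c) ℤ, Unimodular V ∧ PartialHNF hrc k (H * V) ∧
      (H * V) k (Fin.castLE hrc k) = - H k (Fin.castLE hrc k) := by
  let d : Fin c → ℤ := fun j => if j = Fin.castLE hrc k then -1 else 1
  refine ⟨Matrix.diagonal d, ?_, ?_, ?_⟩
  · right
    rw [Matrix.det_diagonal]
    simp [d]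
  · intro i hi
    obtain ⟨h1, h2, h3⟩ := hP i hi
    have hd : ∀ l : Fin c, (l : ℕ) < k → d l = 1 := by
      intro l hl
      apply if_neg
      rintro rfl
      simp at hl
    simp only [Matrix.mul_diagonal]
    refine ⟨?_, ?_, ?_⟩
    · intro l hl
      rw [h1 l hl, zero_mul]
    · rwa [hd _ (by simpa using hi), mul_one]
    · intro l hl
      rw [hd (Fin.castLE hrc i) (by simpa using hi), hd l (by omega), mul_one, mul_one]
      exact h3 l hl
  · simp [Matrix.mul_diagonal, d]

theorem reduce_op {r c : ℕ} (hrc : r ≤ c) (H : Matrix (Fin r) (Fin c) ℤ) (k : Fin r)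
    (hP : PartialHNF hrc k H) :
    ∃ V : Matrix (Fin c) (Fin c) ℤ, Unimodular V ∧ PartialHNF hrc k (H * V) ∧
      (H * V) k (Fin.castLE hrc k) = H k (Fin.castLE hrc k) ∧
      ∀ j, j ≠ Fin.castLE hrc k → (H * V) k j = H k j % H k (Fin.castLE hrc k) := by
  let K := Fin.castLE hrc k
  let q : Fin c → ℤ := fun j => if j = K then 0 else -(H k j / H k K)
  let V : Matrix (Fin c) (Fin c) ℤ := 1 + vecMulVec (Pi.single K 1) q
  have hmul : ∀ i j, (H * V) i j = H i j + H i K * q j := by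
    intro i j
    simp only [V]
    rw [Matrix.mul_add, Matrix.mul_one, Matrix.add_apply, Matrix.mul_vecMulVec]
    simp [vecMulVec_apply]
  refine ⟨V, ?_, ?_, ?_, ?_⟩
  · left
    simp only [V]
    rw [Matrix.vecMulVec_eq Unit, Matrix.det_one_add_replicateCol_mul_replicateRow]
    simp [q]
  · intro i hi
    have hz : H i K = 0 := (hP i hi).1 K hi
    have : ∀ j, (H * V) i j = H i j := by
      intro j
      rw [hmul, hz, zero_mul, add_zero]
    simp only [this]
    exact hP i hi
  · rw [hmul]
    simp [q, K]
  · intro j hj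
    rw [hmul, Int.emod_def]
    simp only [q, K, hj, if_false]
    ring

theorem exists_partial {r c : ℕ} (hrc : r ≤ c) (M : Matrix (Fin r) (Fin c) ℤ)
    (hrank : M.rank = r) (k : ℕ) (hk : k ≤ r) :
    ∃ U : Matrix (Fin c) (Fin c) ℤ, Unimodular U ∧ PartialHNF hrc k (M * U) := by
  induction k with
  | zero => exact ⟨1, Or.inl Matrix.det_one, fun i hi => absurd hi (Nat.not_lt_zero _)⟩
  | succ n ih =>
    obtain ⟨U, hU, hP⟩ := ih (by omega)
    let k : Fin r := ⟨n, hk⟩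
    let K := Fin.castLE hrc k
    change PartialHNF hrc k (M * U) at hP
    let S : ℕ → Prop := fun m => ∃ U : Matrix (Fin c) (Fin c) ℤ, Unimodular U ∧
      PartialHNF hrc k (M * U) ∧ (M * U) k K = m ∧ 0 < m
    have hS : ∃ m, S m := by
      have hr : (M * U).rank = r := by
        rw [Matrix.rank_mul_eq_left_of_isUnit_det, hrank]
        exact Int.isUnit_iff.2 hU
      obtain ⟨j, hj, hne⟩ := exists_pivot hrc _ hr k hP
      obtain ⟨V, hV, hVP, hVk⟩ := swap_op hrc _ k hP j hj
      rw [Matrix.mul_assoc] at hVP hVk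
      rcases lt_or_gt_of_ne hne with h | h
      · obtain ⟨W, hW, hWP, hWk⟩ := neg_op hrc _ k hVP
        rw [Matrix.mul_assoc] at hWP hWk
        refine ⟨((M * U) k j).natAbs, _, (hU.mul hV).mul hW, hWP, ?_, by omega⟩
        rw [hWk, hVk]
        omega
      · refine ⟨((M * U) k j).natAbs, _, hU.mul hV, hVP, ?_, by omega⟩
        rw [hVk]
        omega
    classical
    obtain ⟨m, ⟨U, hU, hP, hm, hm0⟩, hmin⟩ : ∃ m, S m ∧ ∀ m', S m' → m ≤ m' :=
      ⟨Nat.find hS, Nat.find_spec hS, fun m' h => Nat.find_min' hS h⟩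
    obtain ⟨V, hV, hVP, hVk, hVj⟩ := reduce_op hrc _ k hP
    rw [Matrix.mul_assoc] at hVP hVk hVj
    change _ = (M * U) k K at hVk
    change ∀ j, j ≠ K → _ = _ % (M * U) k K at hVj
    rw [hm] at hVk hVj
    have hm0' : (0 : ℤ) < m := by exact_mod_cast hm0
    have hb : ∀ j, j ≠ K → 0 ≤ (M * (U * V)) k j ∧ (M * (U * V)) k j < m := by
      intro j hj
      rw [hVj j hj]
      exact ⟨Int.emod_nonneg _ hm0'.ne', Int.emod_lt_of_pos _ hm0'⟩
    refine ⟨U * V, hU.mul hV, ?_⟩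
    intro i hi
    rcases Nat.lt_succ_iff_lt_or_eq.1 hi with h | h
    · exact hVP i h
    · have hik : i = k := Fin.ext h
      subst hik
      refine ⟨?_, ?_, ?_⟩
      · intro j hj
        have hjK : j ≠ K := by
          rintro rfl
          exact lt_irrefl _ hj
        obtain ⟨h0, h1⟩ := hb j hjK
        by_contra hne
        obtain ⟨W, hW, hWP, hWk⟩ := swap_op hrc _ k hVP j hj.le
        rw [Matrix.mul_assoc] at hWP hWk
        have := hmin ((M * (U * V)) k j).natAbs
          ⟨_, (hU.mul hV).mul hW, hWP, by
            change (_ : ℤ) = _ at hWk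
            rw [hWk]; omega, by omega⟩
        omega
      · exact hVk ▸ hm0'
      · intro j hj
        have hjK : j ≠ K := by
          rintro rfl
          exact lt_irrefl _ hj
        have := hb j hjK
        rw [← hVk] at this
        exact this

theorem stmt_0 {r c : ℕ} (hrc : r ≤ c) (M : Matrix (Fin r) (Fin c) ℤ)
    (hrank : M.rank = r) :
    ∃ U : Matrix (Fin c) (Fin c) ℤ, Unimodular U ∧ RHNF hrc (M * U) := by
  obtain ⟨U, hU, hP⟩ := exists_partial hrc M hrank r le_rfl
  exact ⟨U, hU, fun i => (hP i i.2).1, fun i => (hP i i.2).2.1, fun i => (hP i i.2).2.2⟩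
end

section
/- Let M be an n×n integer matrix with nonzero determinant. Then there exists an n×n unimodular integer matrix U such that UM is in left Hermite normal form, i.e. UM is lower triangular, every diagonal entry of UM is positive, and 0 ≤ (UM) i j < (UM) j j for all i > j. -/
open Matrix

/-- A square integer matrix is in left Hermite normal form: it is lower triangular,
its diagonal entries are positive, and each entry below the diagonal is nonnegative
and smaller than the diagonal entry of its column. -/
def LHNF {n : ℕ} (H : Matrix (Fin n) (Fin n) ℤ) : Prop :=
  (∀ i j, i < j → H i j = 0) ∧
  (∀ i, 0 < H i i) ∧
  (∀ i j, j < i → 0 ≤ H i j ∧ H i j < H j j)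

theorem aux_gen {n : ℕ} (L : Submodule ℤ (Fin n → ℤ)) (j : Fin n)
    (h0 : ∃ x ∈ L, (∀ k, j < k → x k = 0) ∧ x j ≠ 0) :
    ∃ x ∈ L, (∀ k, j < k → x k = 0) ∧ 0 < x j ∧
      ∀ y ∈ L, (∀ k, j < k → y k = 0) → x j ∣ y j := by
  classical
  have hex : ∃ d : ℕ, 0 < d ∧ ∃ x ∈ L, (∀ k, j < k → x k = 0) ∧ x j = (d : ℤ) := by
    obtain ⟨x, hx, hk, hj⟩ := h0
    refine ⟨(x j).natAbs, Int.natAbs_pos.mpr hj, ?_⟩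
    rcases le_total 0 (x j) with h | h
    · exact ⟨x, hx, hk, by omega⟩
    · refine ⟨-x, L.neg_mem hx, fun k hjk => by simp [hk k hjk], ?_⟩
      simp only [Pi.neg_apply]; omega
  obtain ⟨hd, x, hx, hk, hj⟩ := Nat.find_spec hex
  have hmin := fun m => Nat.find_min (H := hex) (m := m)
  generalize Nat.find hex = d at *
  refine ⟨x, hx, hk, by omega, fun y hy hyk => ?_⟩
  by_contra hdvd
  have hpos : 0 < x j := by omega
  have h1 := Int.emod_nonneg (y j) hpos.ne'
  have h2 := Int.emod_lt_of_pos (y j) hpos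
  have h3 : y j % x j ≠ 0 := fun h => hdvd (Int.dvd_of_emod_eq_zero h)
  refine hmin (y j % x j).toNat (by omega) ⟨by omega, y - (y j / x j) • x,
    L.sub_mem hy (L.smul_mem _ hx), fun k hjk => by simp [hk k hjk, hyk k hjk], ?_⟩
  have h4 := Int.emod_add_mul_ediv (y j) (x j)
  rw [Int.toNat_of_nonneg h1]
  simp only [Pi.sub_apply, Pi.smul_apply, smul_eq_mul]
  linarith

theorem aux_red {n : ℕ} (L : Submodule ℤ (Fin n → ℤ)) (g : Fin n → Fin n → ℤ)
    (hg : ∀ j, g j ∈ L) (hz : ∀ j k, j < k → g j k = 0) (hp : ∀ j, 0 < g j j) (i : Fin n)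
    (m : ℕ) : ∃ x ∈ L, (∀ k, i < k → x k = 0) ∧ x i = g i i ∧
      ∀ j, j < i → (i : ℕ) ≤ j + m → 0 ≤ x j ∧ x j < g j j := by
  induction m with
  | zero =>
    refine ⟨g i, hg i, hz i, rfl, fun j hj h => ?_⟩
    have : (j : ℕ) < i := hj
    omega
  | succ m ih =>
    obtain ⟨x, hx, hk, hi, hr⟩ := ih
    by_cases hm : m + 1 ≤ (i : ℕ)
    · have hin := i.isLt
      obtain ⟨p, hpv⟩ : ∃ p : Fin n, (p : ℕ) + (m + 1) = i :=
        ⟨⟨i - (m + 1), by omega⟩, by simp only []; omega⟩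
      have hpi : p < i := by rw [Fin.lt_def]; omega
      refine ⟨x - (x p / g p p) • g p, L.sub_mem hx (L.smul_mem _ (hg p)),
        fun k hik => by simp [hk k hik, hz p k (hpi.trans hik)],
        by simp [hi, hz p i hpi], fun j hj h => ?_⟩
      rcases eq_or_ne j p with rfl | hne
      · have h1 := Int.emod_nonneg (x j) (hp j).ne'
        have h2 := Int.emod_lt_of_pos (x j) (hp j)
        have h4 := Int.emod_add_mul_ediv (x j) (g j j)
        simp only [Pi.sub_apply, Pi.smul_apply, smul_eq_mul]
        constructor <;> linarith
      · have hne' : (j : ℕ) ≠ p := fun h => hne (Fin.ext h)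
        have hpj : p < j := by rw [Fin.lt_def]; omega
        simpa [hz p j hpj] using hr j hj (by omega)
    · refine ⟨x, hx, hk, hi, fun j hj h => hr j hj ?_⟩
      omega

theorem aux_span {n : ℕ} (L : Submodule ℤ (Fin n → ℤ)) (H : Matrix (Fin n) (Fin n) ℤ)
    (hH : ∀ j, H j ∈ L) (hz : ∀ j k, j < k → H j k = 0)
    (hd : ∀ j, ∀ y ∈ L, (∀ k, j < k → y k = 0) → H j j ∣ y j) (m : ℕ) :
    ∀ y ∈ L, (∀ k : Fin n, m ≤ (k : ℕ) → y k = 0) → ∃ c, c ᵥ* H = y := by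
  induction m with
  | zero =>
    intro y _ h
    refine ⟨0, ?_⟩
    ext k
    simp [h k (Nat.zero_le _)]
  | succ m ih =>
    intro y hy h
    by_cases hm : m < n
    · obtain ⟨q, hq⟩ := hd ⟨m, hm⟩ y hy (fun k hk => h k hk)
      obtain ⟨c, hc⟩ := ih (y - q • H ⟨m, hm⟩) (L.sub_mem hy (L.smul_mem _ (hH _))) (by
        intro k hk
        rcases eq_or_ne k ⟨m, hm⟩ with rfl | hne
        · simp [hq, mul_comm]
        · have hne' : (k : ℕ) ≠ m := fun h => hne (Fin.ext h)
          have hlt : (⟨m, hm⟩ : Fin n) < k := by rw [Fin.lt_def]; simp only []; omega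
          simp [h k (by omega), hz _ k hlt])
      refine ⟨c + q • Pi.single ⟨m, hm⟩ 1, ?_⟩
      rw [Matrix.add_vecMul, Matrix.smul_vecMul, hc, Matrix.single_one_vecMul]
      exact sub_add_cancel _ _
    · exact ih y hy fun k hk => absurd k.isLt (by omega)

theorem stmt_1 {n : ℕ} (M : Matrix (Fin n) (Fin n) ℤ) (hM : M.det ≠ 0) :
    ∃ U : Matrix (Fin n) (Fin n) ℤ, Unimodular U ∧ LHNF (U * M) := by
  let L : Submodule ℤ (Fin n → ℤ) := LinearMap.range M.vecMulLinear
  have hL : ∀ v, v ᵥ* M ∈ L := fun v => ⟨v, rfl⟩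
  have hgen := fun j => aux_gen L j (by
    have h : M.adjugate j ᵥ* M = (M.adjugate * M) j := by
      ext k; simp [Matrix.mul_apply, Matrix.vecMul, dotProduct]
    refine ⟨M.adjugate j ᵥ* M, hL _, fun k hk => ?_, ?_⟩
    · rw [h, Matrix.adjugate_mul]; simp [Matrix.one_apply, hk.ne]
    · rw [h, Matrix.adjugate_mul]; simpa using hM)
  choose g hg hgz hgp hgd using hgen
  choose H hH hHz hHd hHr using fun i => aux_red L g hg hgz hgp i n
  choose U hU using hH
  have hUM : (Matrix.of U) * M = Matrix.of H := by
    ext i k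
    have := congrFun (hU i) k
    simpa [Matrix.mul_apply, Matrix.vecMul, dotProduct] using this
  have hsp := fun i => aux_span L H (fun i => ⟨U i, hU i⟩) hHz
    (fun j y hy h => by rw [hHd j]; exact hgd j y hy h) n (M i)
    ⟨Pi.single i 1, by simp [Matrix.single_one_vecMul]; rfl⟩
    (fun k hk => absurd k.isLt (by omega))
  choose V hV using hsp
  have hVH : Matrix.of V * Matrix.of H = M := by
    ext i k
    have := congrFun (hV i) k
    simpa [Matrix.mul_apply, Matrix.vecMul, dotProduct] using this
  refine ⟨Matrix.of U, ?_, ?_⟩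
  · have h1 : (Matrix.of V).det * ((Matrix.of U).det * M.det) = M.det := by
      rw [← Matrix.det_mul, ← Matrix.det_mul, hUM, hVH]
    have h2 : (Matrix.of U).det * (Matrix.of V).det = 1 := by
      apply mul_right_cancel₀ hM
      linarith
    exact Int.isUnit_iff.mp (IsUnit.of_mul_eq_one _ h2)
  · rw [hUM]
    refine ⟨hHz, fun i => ?_, fun i j hij => ?_⟩
    · rw [Matrix.of_apply, hHd]; exact hgp i
    · rw [Matrix.of_apply, Matrix.of_apply, hHd j]
      exact hHr i j hij (by omega)
end

section
/- Let M and M′ be n×n integer matrices, both with nonzero determinant and both in left Hermite normal form. If there exists an n×n unimodular matrix U with M = U·M′, then M = M′. -/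
open Matrix

theorem key_sum {n : ℕ} (M' U : Matrix (Fin n) (Fin n) ℤ)
    (h2 : LHNF M') (i j : Fin n) (hij : j ≠ i)
    (hz : ∀ k, j < k → k ≠ i → U i k = 0) :
    (U * M') i j = U i j * M' j j + U i i * M' i j := by
  rw [Matrix.mul_apply]
  apply Finset.sum_eq_add j i hij
  · rintro c - ⟨hc1, hc2⟩
    rcases lt_or_gt_of_ne hc1 with hc | hc
    · rw [h2.1 c j hc, mul_zero]
    · rw [hz c hc hc2, zero_mul]
  · simp
  · simp

theorem stmt_3 {n : ℕ} (M M' : Matrix (Fin n) (Fin n) ℤ)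
    (hM : M.det ≠ 0) (hM' : M'.det ≠ 0) (h1 : LHNF M) (h2 : LHNF M')
    (U : Matrix (Fin n) (Fin n) ℤ) (hU : Unimodular U) (h : M = U * M') :
    M = M' := by
  have down : ∀ (P : Fin n → Prop), (∀ j, (∀ k, j < k → P k) → P j) → ∀ j, P j := by
    intro P hP j
    exact (wellFounded_gt (α := Fin n)).induction j (fun j ih => hP j ih)
  have upper : ∀ i j, i < j → U i j = 0 := by
    intro i
    apply down
    intro j ih hij
    have e := key_sum M' U h2 i j hij.ne' (fun k hk _ => ih k hk (hij.trans hk))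
    rw [← h, h1.1 i j hij, h2.1 i j hij, mul_zero, add_zero] at e
    rcases mul_eq_zero.1 e.symm with e | e
    · exact e
    · exact absurd e (h2.2.1 j).ne'
  have diag : ∀ i, M i i = U i i * M' i i := by
    intro i
    rw [h, Matrix.mul_apply]
    apply Finset.sum_eq_single i
    · intro c _ hc
      rcases lt_or_gt_of_ne hc with hc | hc
      · rw [h2.1 c i hc, mul_zero]
      · rw [upper i c hc, zero_mul]
    · simp
  have hdet : U.det = ∏ i, U i i :=
    Matrix.det_of_isLowerTriangular U (fun i j hij => upper i j hij)
  have one : ∀ i, U i i = 1 := by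
    intro i
    have hu : IsUnit U.det := Int.isUnit_iff.2 hU
    have hd : U i i ∣ U.det := by
      rw [hdet]
      exact Finset.dvd_prod_of_mem _ (Finset.mem_univ i)
    rcases Int.isUnit_iff.1 (isUnit_of_dvd_unit hd hu) with e | e
    · exact e
    · have a := diag i
      have b := h1.2.1 i
      have c := h2.2.1 i
      rw [e] at a
      omega
  have lower : ∀ i j, j < i → U i j = 0 := by
    intro i
    apply down
    intro j ih hij
    have e := key_sum M' U h2 i j hij.ne (fun k hk hki => by
      rcases lt_or_gt_of_ne hki with hc | hc
      · exact ih k hk hc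
      · exact upper i k hc)
    rw [← h, one, one_mul] at e
    have a := h1.2.2 i j hij
    have b := h2.2.2 i j hij
    have d := diag j
    rw [one, one_mul] at d
    rw [d] at a
    have p := h2.2.1 j
    by_contra hne
    rcases lt_or_gt_of_ne hne with q | q
    · nlinarith
    · nlinarith
  have hU1 : U = 1 := by
    ext i j
    rcases lt_trichotomy i j with q | q | q
    · rw [upper i j q, Matrix.one_apply_ne q.ne]
    · subst q
      rw [one, Matrix.one_apply_eq]
    · rw [lower i j q, Matrix.one_apply_ne q.ne']
  rw [h, hU1, one_mul]
end

section
/- Let A be an r×n integer matrix with 0 < r < n and let d be a positive integer. There exists an (n−r)×n integer matrix X such that the determinant of the n×n matrix [A;X] obtained by stacking A above X equals d or −d, if and only if A has rank r and the greatest divisor of A divides d. -/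
open Matrix

/-- The greatest divisor of an `r × c` integer matrix: the greatest common divisor of
the determinants of all `r × r` submatrices obtained by selecting `r` of the `c`
columns. -/
def greatestDivisor {r c : ℕ} (M : Matrix (Fin r) (Fin c) ℤ) : ℤ :=
  Finset.univ.gcd fun f : Fin r → Fin c => (M.submatrix id f).det

/-- The matrix `[A; X]` obtained by stacking `A` above `X`. -/
def stack {r k n : ℕ} (A : Matrix (Fin r) (Fin n) ℤ) (X : Matrix (Fin k) (Fin n) ℤ) :
    Matrix (Fin (r + k)) (Fin n) ℤ :=
  (Matrix.fromRows A X).submatrix finSumFinEquiv.symm id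

theorem gd_dvd_det_mul {r c : ℕ} (A : Matrix (Fin r) (Fin c) ℤ) (W : Matrix (Fin c) (Fin r) ℤ) :
    greatestDivisor A ∣ (A * W).det := by
  have h1 : (A * W).det = Matrix.detRowAlternating.toMultilinearMap
      (fun i => ∑ j, W j i • (fun a => A a j)) := by
    rw [← Matrix.det_transpose]
    change Matrix.detRowAlternating _ = Matrix.detRowAlternating _
    congr 1
    funext i a
    simp [Matrix.mul_apply, mul_comm]
  rw [h1, MultilinearMap.map_sum]
  refine Finset.dvd_sum fun f _ => ?_
  rw [MultilinearMap.map_smul_univ]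
  refine Dvd.dvd.mul_left ?_ _
  have h2 : Matrix.detRowAlternating.toMultilinearMap (fun i a => A a (f i))
      = (A.submatrix id f).det := by
    rw [← Matrix.det_transpose]
    rfl
  rw [h2]
  exact Finset.gcd_dvd (Finset.mem_univ f)

theorem exists_decomp {r k : ℕ} (B : Matrix (Fin r) (Fin r ⊕ Fin k) ℤ) (hB : B.rank = r) :
    ∃ (W V : Matrix (Fin r ⊕ Fin k) (Fin r ⊕ Fin k) ℤ) (H : Matrix (Fin r) (Fin r) ℤ),
      W * V = 1 ∧ V * W = 1 ∧ B * W = Matrix.fromCols H 0 := by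
  let f := B.mulVecLin
  have hrange : Module.finrank ℤ (LinearMap.range f) = r := hB
  have hker : Module.finrank ℤ (LinearMap.ker f) = k := by
    have h := Submodule.finrank_quotient_add_finrank (LinearMap.ker f)
    rw [f.quotKerEquivRange.finrank_eq, hrange] at h
    simpa using h
  let b1 := Module.finBasisOfFinrankEq ℤ (LinearMap.range f) hrange
  let b2 := Module.finBasisOfFinrankEq ℤ (LinearMap.ker f) hker
  obtain ⟨s, hs⟩ := Module.projective_lifting_property f.rangeRestrict LinearMap.id
    f.surjective_rangeRestrict
  have hs' : ∀ y, f (s y) = y := fun y => by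
    have := congrArg Subtype.val (LinearMap.congr_fun hs y)
    simpa using this
  let φ : (LinearMap.range f × LinearMap.ker f) →ₗ[ℤ] (Fin r ⊕ Fin k → ℤ) :=
    s.coprod (LinearMap.ker f).subtype
  have hφ : Function.Bijective φ := by
    constructor
    · rw [injective_iff_map_eq_zero]
      rintro ⟨y, z⟩ h
      have h0 : s y + (z : Fin r ⊕ Fin k → ℤ) = 0 := by simpa [φ] using h
      have hz : f z = 0 := z.2
      have hy : y = 0 := by
        have := congrArg f h0
        rw [map_add, hs', hz, map_zero, add_zero] at this
        exact Subtype.ext this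
      subst hy
      have : z = 0 := by
        apply Subtype.ext
        simpa using h0
      subst this
      rfl
    · intro x
      refine ⟨(f.rangeRestrict x, ⟨x - s (f.rangeRestrict x), ?_⟩), ?_⟩
      · rw [LinearMap.mem_ker, map_sub, hs']
        simp
      · simp [φ]
  let b := (b1.prod b2).map (LinearEquiv.ofBijective φ hφ)
  let e := Pi.basisFun ℤ (Fin r ⊕ Fin k)
  refine ⟨e.toMatrix b, b.toMatrix e, fun i j => (b1 j : Fin r → ℤ) i,
    e.toMatrix_mul_toMatrix_flip b, b.toMatrix_mul_toMatrix_flip e, ?_⟩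
  have hcol : ∀ i j, (B * e.toMatrix b) i j = f (b j) i := by
    intro i j
    simp [f, Matrix.mul_apply, Matrix.mulVec, dotProduct, Module.Basis.toMatrix_apply, e]
  ext i j
  rw [hcol]
  rcases j with j | j
  · have : b (Sum.inl j) = s (b1 j) := by simp [b, φ]
    rw [this, hs']
    rfl
  · have : b (Sum.inr j) = b2 j := by simp [b, φ]
    rw [this, (b2 j).2]
    rfl

theorem stack_det {r k : ℕ} (A : Matrix (Fin r) (Fin (r + k)) ℤ)
    (X : Matrix (Fin k) (Fin (r + k)) ℤ) :
    (stack A X).det = (Matrix.fromRows (A.submatrix id finSumFinEquiv)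
      (X.submatrix id finSumFinEquiv)).det := by
  rw [← Matrix.det_submatrix_equiv_self finSumFinEquiv (stack A X)]
  congr 1
  ext i j
  rcases i with i | i <;> simp [stack]

theorem rank_of_stack {r k : ℕ} (B : Matrix (Fin r) (Fin r ⊕ Fin k) ℤ)
    (Y : Matrix (Fin k) (Fin r ⊕ Fin k) ℤ) (h : (Matrix.fromRows B Y).det ≠ 0) :
    B.rank = r := by
  apply le_antisymm
  · simpa using B.rank_le_card_height
  have h1 : B * (Matrix.fromRows B Y).adjugate.submatrix id Sum.inl
      = (Matrix.fromRows B Y).det • (1 : Matrix (Fin r) (Fin r) ℤ) := by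
    have h2 := Matrix.mul_adjugate (Matrix.fromRows B Y)
    ext i j
    have h3 := congrFun (congrFun h2 (Sum.inl i)) (Sum.inl j)
    simpa [Matrix.mul_apply, Matrix.one_apply] using h3
  have h4 := Matrix.rank_mul_le_left B ((Matrix.fromRows B Y).adjugate.submatrix id Sum.inl)
  rw [h1, Matrix.rank_of_det_ne_zero] at h4
  · simpa using h4
  · rw [Matrix.det_smul, Matrix.det_one, mul_one]
    exact pow_ne_zero _ h

/-- Writing `n = r + k` with `0 < r` and `0 < k` (so `0 < r < n`):  the equation
`|det [A; X]| = d` has an integer solution `X` iff `A` has rank `r` and the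
greatest divisor of `A` divides `d`. -/
theorem stmt_6 {r k : ℕ} (hr : 0 < r) (hk : 0 < k)
    (A : Matrix (Fin r) (Fin (r + k)) ℤ) (d : ℤ) (hd : 0 < d) :
    (∃ X : Matrix (Fin k) (Fin (r + k)) ℤ,
        (stack A X).det = d ∨ (stack A X).det = -d) ↔
      (A.rank = r ∧ greatestDivisor A ∣ d) := by
  set e : Fin r ⊕ Fin k ≃ Fin (r + k) := finSumFinEquiv with he
  have hrk : (A.submatrix id e).rank = A.rank := A.rank_submatrix (Equiv.refl _) e
  constructor
  · rintro ⟨X, hX⟩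
    have hdvd : (stack A X).det ∣ d := by
      rcases hX with h | h <;> simp [h]
    have hne : (stack A X).det ≠ 0 := by
      rcases hX with h | h <;> rw [h] <;> omega
    rw [stack_det] at hne
    have hrank := rank_of_stack _ _ hne
    refine ⟨hrk ▸ hrank, ?_⟩
    obtain ⟨W, V, H, hWV, hVW, hH⟩ := exists_decomp _ hrank
    have hg : greatestDivisor A ∣ H.det := by
      have : H = A * W.submatrix e.symm Sum.inl := by
        ext i j
        have h3 := congrFun (congrFun hH i) (Sum.inl j)
        rw [Matrix.fromCols_apply_inl] at h3
        rw [← h3, Matrix.mul_apply, Matrix.mul_apply]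
        exact Fintype.sum_equiv e _ _ (fun x => by simp [he])
      rw [this]
      exact gd_dvd_det_mul _ _
    refine (hg.trans ?_).trans hdvd
    rw [stack_det]
    set Y := X.submatrix id (finSumFinEquiv : Fin r ⊕ Fin k ≃ Fin (r + k))
    have hm : Matrix.fromRows (A.submatrix id finSumFinEquiv) Y * W =
        Matrix.fromBlocks H 0 (Y * W).toCols₁ (Y * W).toCols₂ := by
      rw [Matrix.fromRows_mul, hH, ← Matrix.fromRows_fromCols_eq_fromBlocks,
        Matrix.fromCols_toCols]
    have hdet := congrArg Matrix.det hm
    rw [Matrix.det_mul, Matrix.det_fromBlocks_zero₁₂] at hdet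
    have hu : W.det * V.det = 1 := by rw [← Matrix.det_mul, hWV, Matrix.det_one]
    exact ((IsUnit.of_mul_eq_one _ hu).dvd_mul_right).mp ⟨_, hdet⟩
  · rintro ⟨hA, hg⟩
    obtain ⟨W, V, H, hWV, hVW, hH⟩ := exists_decomp (A.submatrix id e) (hrk.trans hA)
    let F : Matrix (Fin r) (Fin r ⊕ Fin k) ℤ := Matrix.fromCols H 0
    have hB : A.submatrix id e = F * V := by
      change _ = F at hH
      rw [← hH, Matrix.mul_assoc, hWV, Matrix.mul_one]
    have hHg : H.det ∣ greatestDivisor A := by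
      refine Finset.dvd_gcd fun f _ => ?_
      have : A.submatrix id f = H * V.submatrix Sum.inl (fun i => e.symm (f i)) := by
        ext i j
        have h3 := congrFun (congrFun hB i) (e.symm (f j))
        simpa [Matrix.mul_apply, F] using h3
      rw [this, Matrix.det_mul]
      exact dvd_mul_right _ _
    obtain ⟨m, hm⟩ := hHg.trans hg
    let D : Matrix (Fin k) (Fin k) ℤ := Matrix.diagonal (Function.update 1 ⟨0, hk⟩ m)
    have hD : D.det = m := by
      rw [Matrix.det_diagonal, Finset.prod_update_of_mem (Finset.mem_univ _)]
      simp
    have hu : W.det * V.det = 1 := by rw [← Matrix.det_mul, hWV, Matrix.det_one]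
    let G : Matrix (Fin k) (Fin r ⊕ Fin k) ℤ := Matrix.fromCols 0 D
    refine ⟨(G * V).submatrix id e.symm, ?_⟩
    have hS : (stack A ((G * V).submatrix id e.symm)).det = d * V.det := by
      rw [stack_det, ← he, hB]
      have : ((G * V).submatrix id e.symm).submatrix
          id e = G * V := by
        ext i j
        simp
      rw [this, ← Matrix.fromRows_mul, Matrix.fromRows_fromCols_eq_fromBlocks, Matrix.det_mul,
        Matrix.det_fromBlocks_zero₁₂, hD, hm]
    rw [hS]
    rcases Int.isUnit_iff.mp (IsUnit.of_mul_eq_one _ ((mul_comm _ _).trans hu)) with h | h <;>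
      simp [h]
end

section
/- Let A be an r×n integer matrix of rank r with 0 < r < n whose greatest divisor equals 1 (i.e. A is a prime matrix). Then for every positive integer d there exists an (n−r)×n integer matrix X such that the determinant of the stacked n×n matrix [A;X] equals d or −d. -/
open Matrix

lemma exists_rightInv {r n : ℕ} (A : Matrix (Fin r) (Fin n) ℤ)
    (h : greatestDivisor A = 1) : ∃ B : Matrix (Fin n) (Fin r) ℤ, A * B = 1 := by
  obtain ⟨c, hc⟩ := Finset.gcd_eq_sum_mul (Finset.univ)
    (fun f : Fin r → Fin n => (A.submatrix id f).det)
  have h1 : ∑ f : Fin r → Fin n, (A.submatrix id f).det * c f = 1 := by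
    rw [← h]; exact hc.symm
  refine ⟨∑ f : Fin r → Fin n, c f •
    (((1 : Matrix (Fin n) (Fin n) ℤ).submatrix id f) * (A.submatrix id f).adjugate), ?_⟩
  have key : ∀ f : Fin r → Fin n, A * (c f •
    (((1 : Matrix (Fin n) (Fin n) ℤ).submatrix id f) * (A.submatrix id f).adjugate))
      = ((A.submatrix id f).det * c f) • (1 : Matrix (Fin r) (Fin r) ℤ) := by
    intro f
    have : A * (1 : Matrix (Fin n) (Fin n) ℤ).submatrix id f = A.submatrix id f := by
      ext i j
      simp [Matrix.mul_apply, Matrix.one_apply]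
    rw [Matrix.mul_smul, ← Matrix.mul_assoc, this, Matrix.mul_adjugate, smul_smul, mul_comm]
  rw [Matrix.mul_sum, Finset.sum_congr rfl (fun f _ => key f), ← Finset.sum_smul, h1, one_smul]

lemma exists_completion {r k : ℕ} (A : Matrix (Fin r) (Fin (r + k)) ℤ)
    (B : Matrix (Fin (r + k)) (Fin r) ℤ) (hAB : A * B = 1) :
    ∃ Y : Matrix (Fin k) (Fin (r + k)) ℤ, IsUnit (stack A Y).det := by
  have hmul : ∀ v, A *ᵥ (B *ᵥ v) = v := fun v => by
    rw [Matrix.mulVec_mulVec, hAB, Matrix.one_mulVec]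
  have hsurj : Function.Surjective A.mulVecLin := fun v => ⟨B *ᵥ v, hmul v⟩
  have hfr : Module.finrank ℤ (LinearMap.ker A.mulVecLin) = k := by
    have := Submodule.finrank_quotient_add_finrank (LinearMap.ker A.mulVecLin)
    rw [(A.mulVecLin.quotKerEquivOfSurjective hsurj).finrank_eq] at this
    simp at this
    exact this
  let b := Module.finBasisOfFinrankEq ℤ (LinearMap.ker A.mulVecLin) hfr
  let p : (Fin (r + k) → ℤ) →ₗ[ℤ] LinearMap.ker A.mulVecLin :=
    LinearMap.codRestrict _ (LinearMap.id - B.mulVecLin ∘ₗ A.mulVecLin) (by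
      intro v
      simp [Matrix.mulVec_sub, -Matrix.mulVec_mulVec, hmul])
  let y : (Fin (r + k) → ℤ) →ₗ[ℤ] (Fin k → ℤ) := b.equivFun.toLinearMap ∘ₗ p
  let c : (Fin k → ℤ) →ₗ[ℤ] (Fin (r + k) → ℤ) :=
    (LinearMap.ker A.mulVecLin).subtype ∘ₗ b.equivFun.symm.toLinearMap
  let Y := LinearMap.toMatrix' y
  let C := LinearMap.toMatrix' c
  have hY : ∀ v, Y *ᵥ v = y v := fun v => LinearMap.toMatrix'_mulVec y v
  have hC : ∀ v, C *ᵥ v = c v := fun v => LinearMap.toMatrix'_mulVec c v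
  have hker : ∀ v, A *ᵥ (c v) = 0 := fun v => (b.equivFun.symm v).2
  have hAC : A * C = 0 := by
    apply Matrix.mulVec_injective
    funext v
    rw [← Matrix.mulVec_mulVec, hC, hker, Matrix.zero_mulVec]
  have hYB : Y * B = 0 := by
    apply Matrix.mulVec_injective
    funext v
    rw [← Matrix.mulVec_mulVec, hY, Matrix.zero_mulVec]
    have : p (B *ᵥ v) = 0 := by
      apply Subtype.ext
      change B *ᵥ v - B *ᵥ (A *ᵥ (B *ᵥ v)) = 0
      rw [hmul, sub_self]
    change b.equivFun (p (B *ᵥ v)) = 0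
    rw [this, map_zero]
  have hYC : Y * C = 1 := by
    apply Matrix.mulVec_injective
    funext v
    rw [← Matrix.mulVec_mulVec, hC, hY, Matrix.one_mulVec]
    have : p (c v) = b.equivFun.symm v := by
      apply Subtype.ext
      change c v - B *ᵥ (A *ᵥ (c v)) = c v
      rw [hker, Matrix.mulVec_zero, sub_zero]
    change b.equivFun (p (c v)) = v
    rw [this, LinearEquiv.apply_symm_apply]
  refine ⟨Y, ?_⟩
  have hone : stack A Y * (Matrix.fromCols B C).submatrix id finSumFinEquiv.symm = 1 := by
    unfold stack
    rw [← Matrix.submatrix_mul _ _ _ _ _ Function.bijective_id,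
      Matrix.fromRows_mul_fromCols, hAB, hAC, hYB, hYC, Matrix.fromBlocks_one,
      Matrix.submatrix_one_equiv]
  have := congrArg Matrix.det hone
  rw [Matrix.det_mul, Matrix.det_one] at this
  exact IsUnit.of_mul_eq_one _ this

/-- If `A` is a prime matrix (greatest divisor `1`) of full rank, then for every
positive integer `d` the equation `|det [A; X]| = d` is solvable. -/
theorem stmt_7 {r k : ℕ} (hr : 0 < r) (hk : 0 < k)
    (A : Matrix (Fin r) (Fin (r + k)) ℤ) (hrank : A.rank = r)
    (hprime : greatestDivisor A = 1) (d : ℤ) (hd : 0 < d) :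
    ∃ X : Matrix (Fin k) (Fin (r + k)) ℤ,
      (stack A X).det = d ∨ (stack A X).det = -d := by
  obtain ⟨B, hAB⟩ := exists_rightInv A hprime
  obtain ⟨Y, hY⟩ := exists_completion A B hAB
  let D : Matrix (Fin k) (Fin k) ℤ := Matrix.diagonal (Function.update 1 ⟨0, hk⟩ d)
  have hD : D.det = d := by
    simp [D, Matrix.det_diagonal, Finset.prod_update_of_mem]
  have hst : stack A (D * Y) = (Matrix.fromBlocks 1 0 0 D).submatrix
      finSumFinEquiv.symm finSumFinEquiv.symm * stack A Y := by
    unfold stack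
    rw [← Matrix.submatrix_mul _ _ _ _ _ (Equiv.bijective _), Matrix.fromBlocks_mul_fromRows]
    simp
  refine ⟨D * Y, ?_⟩
  rw [hst, Matrix.det_mul, Matrix.det_submatrix_equiv_self, Matrix.det_fromBlocks_zero₂₁, hD]
  rcases Int.isUnit_iff.1 hY with h | h <;> simp [h]
end

section
/- Let A be an r×c integer matrix of rank r (r ≤ c) of the form [N O], where N is an r×r nonsingular lower triangular integer matrix and O is the zero block. Then there exists an r×r unimodular matrix U′ such that U′·A = [N′ O], where N′ is an r×r matrix in left Hermite normal form (lower triangular, positive diagonal entries, and 0 ≤ N′ i j < N′ j j for i > j). -/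
open Matrix

lemma reduce_row {r : ℕ} (N : Matrix (Fin r) (Fin r) ℤ)
    (ht : ∀ i j, i < j → N i j = 0) (hd : ∀ i, N i i ≠ 0) (k : ℕ) :
    k ≤ r → ∀ v : Fin r → ℤ, ∃ w : Fin r → ℤ, (∀ j : Fin r, k ≤ (j : ℕ) → w j = 0) ∧
      (∀ j : Fin r, k ≤ (j : ℕ) → (w ᵥ* N) j = 0) ∧
      ∀ j : Fin r, (j : ℕ) < k → 0 ≤ v j + (w ᵥ* N) j ∧ v j + (w ᵥ* N) j < |N j j| := by
  induction k with
  | zero =>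
    intro _ v
    exact ⟨0, by simp, by simp, by simp⟩
  | succ k ih =>
    intro hk v
    let a : Fin r := ⟨k, hk⟩
    let q : ℤ := -(v a / N a a)
    obtain ⟨w, h1, h2, h3⟩ := ih (by omega) (v + q • N a)
    have key : ∀ j, ((w + Pi.single a q) ᵥ* N) j = (w ᵥ* N) j + q * N a j := by
      intro j
      rw [Matrix.add_vecMul, Matrix.single_vecMul]
      simp
    refine ⟨w + Pi.single a q, ?_, ?_, ?_⟩
    · intro j hj
      have hne : j ≠ a := by
        intro h
        rw [h] at hj
        simp [a] at hj
      simp [h1 j (by omega), hne]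
    · intro j hj
      rw [key, h2 j (by omega), ht a j (by rw [Fin.lt_def]; simp only [a]; omega)]
      simp
    · intro j hj
      rw [key]
      by_cases hjk : (j : ℕ) < k
      · have := h3 j hjk
        simp only [Pi.add_apply, Pi.smul_apply, smul_eq_mul] at this
        constructor <;> linarith [this.1, this.2]
      · have hja : j = a := by
          apply Fin.ext
          simp only [a]
          omega
        subst hja
        have e : v a + ((w ᵥ* N) a + q * N a a) = v a % N a a := by
          rw [h2 a (by simp [a]), Int.emod_def]
          simp only [q]
          ring
        rw [e]
        exact ⟨Int.emod_nonneg _ (hd a), Int.emod_lt_abs _ (hd a)⟩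

/-- If `A = [N O]` is an `r × (r+s)` matrix of rank `r`, where `N` is an `r × r`
nonsingular lower triangular matrix (so `A i j = 0` whenever `i < j`) and `O` is the
zero block, then there is an `r × r` unimodular matrix `U'` with `U' * A = [N' O]`
where `N'` is in left Hermite normal form. -/
theorem stmt_10 {r s : ℕ} (hr : 0 < r)
    (A : Matrix (Fin r) (Fin (r + s)) ℤ) (hrank : A.rank = r)
    (htri : ∀ (i : Fin r) (j : Fin (r + s)), (i : ℕ) < (j : ℕ) → A i j = 0)
    (hN : ((A.submatrix id (Fin.castAdd s)).det ≠ 0)) :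
    ∃ U' : Matrix (Fin r) (Fin r) ℤ, Unimodular U' ∧
      LHNF ((U' * A).submatrix id (Fin.castAdd s)) ∧
      ∀ (i : Fin r) (j : Fin (r + s)), r ≤ (j : ℕ) → (U' * A) i j = 0 := by
  set N := A.submatrix id (Fin.castAdd s) with hNdef
  have ht : ∀ i j, i < j → N i j = 0 := by
    intro i j hij
    exact htri i (Fin.castAdd s j) (by simpa using hij)
  have hd : ∀ i, N i i ≠ 0 := by
    have h : N.det = ∏ i, N i i :=
      Matrix.det_of_lowerTriangular N (fun i j hij => ht i j (by simpa using hij))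
    rw [h, Finset.prod_ne_zero_iff] at hN
    exact fun i => hN i (Finset.mem_univ i)
  choose w h1 h2 h3 using fun i : Fin r =>
    reduce_row N ht hd (i : ℕ) i.2.le ((N i i).sign • N i)
  let U : Matrix (Fin r) (Fin r) ℤ := fun i => Pi.single i (N i i).sign + w i
  have key : ∀ i j, (U * N) i j = (N i i).sign * N i j + (w i ᵥ* N) j := by
    intro i j
    have : (U * N) i j = ((Pi.single i (N i i).sign + w i) ᵥ* N) j := rfl
    rw [this, Matrix.add_vecMul, Matrix.single_vecMul]
    simp
  have hsub : (U * A).submatrix id (Fin.castAdd s) = U * N := rfl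
  have hdiag : ∀ i, (U * N) i i = |N i i| := by
    intro i
    rw [key, h2 i i le_rfl, add_zero, Int.sign_mul_self_eq_abs]
  refine ⟨U, ?_, ?_, ?_⟩
  · have hdet : U.det = ∏ i, U i i := by
      apply Matrix.det_of_lowerTriangular
      intro i j hij
      have hij' : i < j := by simpa using hij
      have := h1 i j hij'.le
      simp [U, this, hij'.ne']
    unfold Unimodular
    rw [← Int.isUnit_iff, hdet]
    apply (IsUnit.prod_univ_iff).2
    intro i
    have h := h1 i i le_rfl
    have e : U i i = (N i i).sign := by simp [U, h]
    rw [e, Int.isUnit_iff]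
    rcases lt_or_gt_of_ne (hd i) with h | h
    · right; exact Int.sign_eq_neg_one_of_neg h
    · left; exact Int.sign_eq_one_of_pos h
  · rw [hsub]
    refine ⟨?_, ?_, ?_⟩
    · intro i j hij
      rw [key, ht i j hij, h2 i j hij.le]
      simp
    · intro i
      rw [hdiag]
      exact abs_pos.2 (hd i)
    · intro i j hij
      rw [hdiag, key]
      simpa using h3 i j hij
  · intro i j hj
    rw [Matrix.mul_apply]
    apply Finset.sum_eq_zero
    intro k _
    rw [htri k j (lt_of_lt_of_le k.2 hj), mul_zero]
end

section
/- Let A be an r×n integer matrix of rank r with 0 < r < n, and let d be a positive integer divisible by the greatest divisor of A. Then there exists a finite set S₁, …, S_N of solutions of the equation |det [A;X]| = d such that every solution X is L-A-equivalent to exactly one of the S_i; that is, the L-A-equivalence classes form a finite partition of the set of all solutions. -/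
open Matrix

/-- `X` is a solution of `|det [A; X]| = d`. -/
def IsSolution {r k : ℕ} (A : Matrix (Fin r) (Fin (r + k)) ℤ) (d : ℤ)
    (X : Matrix (Fin k) (Fin (r + k)) ℤ) : Prop :=
  (stack A X).det = d ∨ (stack A X).det = -d

/-- Two solutions `X`, `X'` are L-A-equivalent if `[A; X] = U · [A; X']` for some
unimodular `U`. -/
def LAEquiv {r k : ℕ} (A : Matrix (Fin r) (Fin (r + k)) ℤ)
    (X X' : Matrix (Fin k) (Fin (r + k)) ℤ) : Prop :=
  ∃ U : Matrix (Fin (r + k)) (Fin (r + k)) ℤ, Unimodular U ∧ stack A X = U * stack A X'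

/-- If two solutions agree modulo `d`, they are L-A-equivalent. -/
theorem laEquiv_of_modEq {r k : ℕ} (A : Matrix (Fin r) (Fin (r + k)) ℤ) (d : ℤ) (hd : 0 < d)
    (X Y : Matrix (Fin k) (Fin (r + k)) ℤ) (hX : IsSolution A d X) (hY : IsSolution A d Y)
    (h : ∀ i j, d ∣ X i j - Y i j) : LAEquiv A X Y := by
  have hM : ∀ i j, d ∣ stack A X i j - stack A Y i j := by
    intro i j
    obtain ⟨i, rfl⟩ := finSumFinEquiv.surjective i
    rcases i with i | i
    · simp [stack]
    · simpa [stack] using h i j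
  unfold IsSolution at hX hY
  unfold LAEquiv Unimodular
  generalize stack A X = M at *
  generalize stack A Y = N at *
  have hN : N.det ≠ 0 := by rcases hY with h | h <;> rw [h] <;> omega
  have hNd : N.det ∣ d := by
    rcases hY with h | h <;> rw [h]
    exact (neg_dvd.mpr dvd_rfl)
  have hdN : d ∣ N.det := by
    rcases hY with h | h <;> rw [h]
    exact (dvd_neg.mpr dvd_rfl)
  choose C hC using fun i j => hNd.trans (hM i j)
  have hMN : M = N + N.det • Matrix.of C := by
    ext i j
    have := hC i j
    simp only [Matrix.add_apply, Matrix.smul_apply, Matrix.of_apply, smul_eq_mul]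
    linarith
  have hU : M = (1 + Matrix.of C * N.adjugate) * N := by
    rw [add_mul, one_mul, Matrix.mul_assoc, Matrix.adjugate_mul, Matrix.mul_smul, Matrix.mul_one]
    exact hMN
  refine ⟨_, ?_, hU⟩
  have hdet := congrArg Matrix.det hU
  rw [Matrix.det_mul] at hdet
  generalize (1 + Matrix.of C * N.adjugate).det = u at *
  have : (u - 1) * N.det = 0 ∨ (u + 1) * N.det = 0 := by
    rcases hX with h1 | h1 <;> rcases hY with h2 | h2 <;> rw [h1, h2] at hdet <;> rw [h2]
    · left; linarith
    · right; linarith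
    · right; linarith
    · left; linarith
  rcases this with h | h <;> rcases mul_eq_zero.mp h with h | h
  · left; omega
  · exact absurd h hN
  · right; omega
  · exact absurd h hN

theorem laEquiv_refl {r k : ℕ} (A : Matrix (Fin r) (Fin (r + k)) ℤ)
    (X : Matrix (Fin k) (Fin (r + k)) ℤ) : LAEquiv A X X :=
  ⟨1, Or.inl Matrix.det_one, (Matrix.one_mul _).symm⟩

theorem laEquiv_symm {r k : ℕ} (A : Matrix (Fin r) (Fin (r + k)) ℤ)
    {X Y : Matrix (Fin k) (Fin (r + k)) ℤ} (h : LAEquiv A X Y) : LAEquiv A Y X := by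
  obtain ⟨U, hU, h⟩ := h
  have hu : IsUnit U.det := Int.isUnit_iff.mpr hU
  refine ⟨U⁻¹, ?_, ?_⟩
  · exact Int.isUnit_iff.mp (Matrix.isUnit_nonsing_inv_det U hu)
  · rw [h, Matrix.nonsing_inv_mul_cancel_left _ _ hu]

theorem laEquiv_trans {r k : ℕ} (A : Matrix (Fin r) (Fin (r + k)) ℤ)
    {X Y Z : Matrix (Fin k) (Fin (r + k)) ℤ} (h : LAEquiv A X Y) (h' : LAEquiv A Y Z) :
    LAEquiv A X Z := by
  obtain ⟨U, hU, h⟩ := h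
  obtain ⟨V, hV, h'⟩ := h'
  refine ⟨U * V, ?_, ?_⟩
  · have := (Int.isUnit_iff.mpr hU).mul (Int.isUnit_iff.mpr hV)
    rw [← Matrix.det_mul] at this
    exact Int.isUnit_iff.mp this
  · rw [h, h', Matrix.mul_assoc]

/-- There is a finite set of solutions such that every solution is L-A-equivalent to
exactly one of them: the L-A-equivalence classes form a finite partition of the set
of all solutions. -/
theorem stmt_13 {r k : ℕ} (hr : 0 < r) (hk : 0 < k)
    (A : Matrix (Fin r) (Fin (r + k)) ℤ) (hrank : A.rank = r)
    (d : ℤ) (hd : 0 < d) (hdvd : greatestDivisor A ∣ d) :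
    ∃ S : Finset (Matrix (Fin k) (Fin (r + k)) ℤ),
      (∀ Y ∈ S, IsSolution A d Y) ∧
      ∀ X, IsSolution A d X → ∃! Y, Y ∈ S ∧ LAEquiv A X Y := by
  classical
  let s : Setoid {X // IsSolution A d X} :=
    { r := fun X Y => LAEquiv A X.1 Y.1
      iseqv := ⟨fun X => laEquiv_refl A X.1, fun h => laEquiv_symm A h,
        fun h h' => laEquiv_trans A h h'⟩ }
  haveI : NeZero d.natAbs := ⟨by omega⟩
  haveI : Finite (Quotient s) := by
    refine Finite.of_injective
      (fun q => (fun i j => ((q.out.1 i j : ℤ) : ZMod d.natAbs) :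
        Fin k → Fin (r + k) → ZMod d.natAbs)) ?_
    intro p q hpq
    rw [← Quotient.out_eq p, ← Quotient.out_eq q]
    refine Quotient.sound (laEquiv_of_modEq A d hd _ _ p.out.2 q.out.2 fun i j => ?_)
    have := congrFun (congrFun hpq i) j
    have h2 := (ZMod.intCast_eq_intCast_iff_dvd_sub _ _ _).mp this.symm
    exact (Int.dvd_natAbs_self).trans h2
  haveI := Fintype.ofFinite (Quotient s)
  refine ⟨Finset.univ.image fun q : Quotient s => q.out.1, ?_, ?_⟩
  · intro Y hY
    obtain ⟨q, -, rfl⟩ := Finset.mem_image.mp hY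
    exact q.out.2
  · intro X hX
    have hout : LAEquiv A (Quotient.mk s ⟨X, hX⟩).out.1 X := Quotient.mk_out (s := s) ⟨X, hX⟩
    refine ⟨(Quotient.mk s ⟨X, hX⟩).out.1,
      ⟨Finset.mem_image_of_mem _ (Finset.mem_univ _), laEquiv_symm A hout⟩, ?_⟩
    rintro Y ⟨hY, hXY⟩
    obtain ⟨q, -, rfl⟩ := Finset.mem_image.mp hY
    have : Quotient.mk s ⟨X, hX⟩ = q := by
      rw [← Quotient.out_eq q]
      exact Quotient.sound hXY
    rw [this]
end

section
/- Let A be an r×n integer matrix of rank r with 0 < r < n, let d be a positive integer, and let X and X′ be two solutions of |det [A;X]| = d. If W is an n×n unimodular matrix with [A;X] = W·[A;X′], then W has the block lower triangular form [[I, O],[Λ, W′]], where I is the r×r identity matrix, O is the r×(n−r) zero block, Λ is an (n−r)×r integer matrix, and W′ is an (n−r)×(n−r) unimodular matrix. -/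
open Matrix

/-- If `X`, `X'` are two solutions of `|det [A; X]| = d` and `[A; X] = W · [A; X']`
with `W` unimodular, then `W` has the block lower triangular form
`[[I, O], [Λ, W']]`: the top-left `r × r` block is the identity, the top-right block
is zero, and the bottom-right `(n-r) × (n-r)` block is unimodular (the bottom-left
block `Λ` being an arbitrary integer matrix). -/
theorem stmt_14 {r k : ℕ} (hr : 0 < r) (hk : 0 < k)
    (A : Matrix (Fin r) (Fin (r + k)) ℤ) (hrank : A.rank = r)
    (d : ℤ) (hd : 0 < d)
    (X X' : Matrix (Fin k) (Fin (r + k)) ℤ)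
    (hX : IsSolution A d X) (hX' : IsSolution A d X')
    (W : Matrix (Fin (r + k)) (Fin (r + k)) ℤ) (hW : Unimodular W)
    (h : stack A X = W * stack A X') :
    W.submatrix (Fin.castAdd k) (Fin.castAdd k) = 1 ∧
    W.submatrix (Fin.castAdd k) (Fin.natAdd r) = 0 ∧
    Unimodular (W.submatrix (Fin.natAdd r) (Fin.natAdd r)) := by
  have hdet : (stack A X').det ≠ 0 := by
    rcases hX' with h1 | h1 <;> rw [h1] <;> omega
  have key : ∀ i : Fin r, W (Fin.castAdd k i) = (1 : Matrix _ _ ℤ) (Fin.castAdd k i) := by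
    intro i
    rw [← sub_eq_zero]
    apply Matrix.eq_zero_of_vecMul_eq_zero hdet
    rw [Matrix.sub_vecMul, sub_eq_zero, ← Matrix.mul_apply_eq_vecMul,
      ← Matrix.mul_apply_eq_vecMul, ← h, Matrix.one_mul]
    ext j
    simp [stack]
  have h1 : W.submatrix (Fin.castAdd k) (Fin.castAdd k) = 1 := by
    ext i j
    simp [key, Matrix.one_apply]
  have h2 : W.submatrix (Fin.castAdd k) (Fin.natAdd r) = 0 := by
    ext i j
    have hne : Fin.castAdd k i ≠ Fin.natAdd r j := by
      intro he
      have := congrArg Fin.val he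
      simp at this
      omega
    simp [key, Matrix.one_apply, hne]
  refine ⟨h1, h2, ?_⟩
  have h3 : W.submatrix finSumFinEquiv finSumFinEquiv =
      Matrix.fromBlocks (W.submatrix (Fin.castAdd k) (Fin.castAdd k))
        (W.submatrix (Fin.castAdd k) (Fin.natAdd r))
        (W.submatrix (Fin.natAdd r) (Fin.castAdd k))
        (W.submatrix (Fin.natAdd r) (Fin.natAdd r)) := by
    ext (i | i) (j | j) <;> simp
  have h4 := Matrix.det_submatrix_equiv_self finSumFinEquiv W
  rw [h3, h1, h2, Matrix.det_fromBlocks_zero₁₂, Matrix.det_one, one_mul] at h4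
  unfold Unimodular at hW ⊢
  rw [h4]
  exact hW
end

section
/- Let A be an r×n integer matrix of rank r with 0 < r < n, let d be a positive integer, and let X and S be two solutions of |det [A;X]| = d. Then X is L-A-equivalent to S if and only if there exist an (n−r)×r integer matrix Λ and an (n−r)×(n−r) unimodular matrix W′ such that X = Λ·A + W′·S. -/
open Matrix

/-- The block lower triangular matrix `[1 0; R T]`. -/
def lowerBlock {r k : ℕ} (R : Matrix (Fin k) (Fin r) ℤ) (T : Matrix (Fin k) (Fin k) ℤ) :
    Matrix (Fin (r + k)) (Fin (r + k)) ℤ :=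
  (Matrix.fromBlocks 1 0 R T).submatrix finSumFinEquiv.symm finSumFinEquiv.symm

theorem lowerBlock_det {r k : ℕ} (R : Matrix (Fin k) (Fin r) ℤ) (T : Matrix (Fin k) (Fin k) ℤ) :
    (lowerBlock R T).det = T.det := by
  unfold lowerBlock
  rw [Matrix.det_submatrix_equiv_self, Matrix.det_fromBlocks_zero₁₂, Matrix.det_one, one_mul]

theorem lowerBlock_mul_stack {r k n : ℕ} (R : Matrix (Fin k) (Fin r) ℤ)
    (T : Matrix (Fin k) (Fin k) ℤ) (A : Matrix (Fin r) (Fin n) ℤ)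
    (S : Matrix (Fin k) (Fin n) ℤ) :
    lowerBlock R T * stack A S = stack A (R * A + T * S) := by
  unfold lowerBlock stack
  rw [Matrix.submatrix_mul_equiv, Matrix.fromBlocks_mul_fromRows]
  simp

theorem mul_stack_lower {r k n : ℕ} (U : Matrix (Fin (r + k)) (Fin (r + k)) ℤ)
    (A : Matrix (Fin r) (Fin n) ℤ) (X S : Matrix (Fin k) (Fin n) ℤ)
    (h : stack A X = U * stack A S) :
    X = (U.submatrix (Fin.natAdd r) (Fin.castAdd k)) * A
      + (U.submatrix (Fin.natAdd r) (Fin.natAdd r)) * S := by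
  ext i j
  have := congrFun (congrFun h (finSumFinEquiv (Sum.inr i))) j
  simpa [stack, Matrix.mul_apply, Fin.sum_univ_add] using this

theorem mul_right_cancel_det {n : ℕ} {U V M : Matrix (Fin n) (Fin n) ℤ}
    (hM : M.det ≠ 0) (h : U * M = V * M) : U = V := by
  have h2 : (U * M) * M.adjugate = (V * M) * M.adjugate := by rw [h]
  rw [Matrix.mul_assoc, Matrix.mul_assoc, Matrix.mul_adjugate, Matrix.mul_smul, Matrix.mul_smul,
    Matrix.mul_one, Matrix.mul_one] at h2
  exact smul_right_injective _ hM h2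

/-- Two solutions `X` and `S` of `|det [A; X]| = d` are L-A-equivalent iff
`X = Λ·A + W'·S` for some integer matrix `Λ` and some unimodular `W'`. -/
theorem stmt_16 {r k : ℕ} (hr : 0 < r) (hk : 0 < k)
    (A : Matrix (Fin r) (Fin (r + k)) ℤ) (hrank : A.rank = r)
    (d : ℤ) (hd : 0 < d)
    (X S : Matrix (Fin k) (Fin (r + k)) ℤ)
    (hX : IsSolution A d X) (hS : IsSolution A d S) :
    LAEquiv A X S ↔
      ∃ (Λ : Matrix (Fin k) (Fin r) ℤ) (W' : Matrix (Fin k) (Fin k) ℤ),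
        Unimodular W' ∧ X = Λ * A + W' * S := by
  constructor
  · rintro ⟨U, hU, h⟩
    have hX' := mul_stack_lower U A X S h
    refine ⟨_, _, ?_, hX'⟩
    have hM : (stack A S).det ≠ 0 := by
      rcases hS with h | h <;> rw [h] <;> omega
    have hUe := mul_right_cancel_det hM
      ((h.symm.trans (congrArg (stack A) hX')).trans (lowerBlock_mul_stack _ _ A S).symm)
    unfold Unimodular at hU ⊢
    rwa [hUe, lowerBlock_det] at hU
  · rintro ⟨R, T, hT, rfl⟩
    refine ⟨lowerBlock R T, ?_, (lowerBlock_mul_stack R T A S).symm⟩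
    unfold Unimodular at hT ⊢
    rwa [lowerBlock_det]
end

section
/- Let p be a prime, and let n and k be positive integers. Then the number of k×k integer matrices in left Hermite normal form with determinant equal to pⁿ is ∑ p^{nk − (j₁ + j₂ + ⋯ + jₙ)}, where the sum ranges over all integer tuples with 1 ≤ j₁ ≤ j₂ ≤ ⋯ ≤ jₙ ≤ k. -/
open Matrix

/-- Allowed entries when the diagonal exponents are `e`. -/
noncomputable def entrySet (p : ℕ) {k : ℕ} (e : Fin k → ℕ) (i j : Fin k) : Finset ℤ :=
  if i < j then {0} else if j < i then Finset.Ico 0 ((p : ℤ) ^ e j) else {(p : ℤ) ^ e j}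

/-- Matrices with diagonal exponents `e`. -/
noncomputable def matSet (p : ℕ) {k : ℕ} (e : Fin k → ℕ) : Finset (Matrix (Fin k) (Fin k) ℤ) :=
  Fintype.piFinset (fun i => Fintype.piFinset (entrySet p e i))

theorem mem_matSet (p : ℕ) {k : ℕ} (e : Fin k → ℕ) (H : Matrix (Fin k) (Fin k) ℤ) :
    H ∈ matSet p e ↔ ∀ i j, H i j ∈ entrySet p e i j := by
  refine (Fintype.mem_piFinset (f := H)
    (t := fun i => Fintype.piFinset (entrySet p e i))).trans ?_
  exact forall_congr' fun i => Fintype.mem_piFinset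

theorem diag_of_mem {p k : ℕ} {e : Fin k → ℕ} {H : Matrix (Fin k) (Fin k) ℤ}
    (h : H ∈ matSet p e) (i : Fin k) : H i i = (p : ℤ) ^ e i := by
  have := (mem_matSet p e H).1 h i i
  simpa [entrySet] using this

theorem card_matSet (p : ℕ) {k : ℕ} (e : Fin k → ℕ) :
    (matSet p e).card = p ^ (∑ j, e j * (k - 1 - j)) := by
  unfold matSet
  have h1 : ∀ i j, (entrySet p e i j).card = if j < i then p ^ e j else 1 := by
    intro i j
    unfold entrySet
    rcases lt_trichotomy i j with h | h | h
    · simp [h, h.le, not_lt_of_gt h]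
    · simp [h]
    · have : ((p : ℤ) ^ e j).toNat = p ^ e j := by
        rw [← Nat.cast_pow, Int.toNat_natCast]
      simp [h, not_lt_of_gt h, this]
  refine (Fintype.card_piFinset _).trans ?_
  simp only [Fintype.card_piFinset, h1]
  rw [Finset.prod_comm, ← Finset.prod_pow_eq_pow_sum]
  refine Finset.prod_congr rfl fun j _ => ?_
  rw [Finset.prod_ite, Finset.prod_const_one, mul_one, Finset.prod_const, ← pow_mul]
  congr 2
  rw [← Fin.card_Ioi]
  congr 1
  ext i
  simp

theorem lhnf_iff (p : ℕ) (hp : p.Prime) (n k : ℕ) (H : Matrix (Fin k) (Fin k) ℤ) :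
    (LHNF H ∧ H.det = (p : ℤ) ^ n) ↔
      ∃ e ∈ Finset.piAntidiag (Finset.univ : Finset (Fin k)) n, H ∈ matSet p e := by
  have hdet : (∀ i j, i < j → H i j = 0) → H.det = ∏ i, H i i := fun h =>
    Matrix.det_of_lowerTriangular H (fun i j hij => h i j hij)
  have hp0 : (0 : ℤ) < p := by exact_mod_cast hp.pos
  constructor
  · rintro ⟨⟨h1, h2, h3⟩, hd⟩
    rw [hdet h1] at hd
    have hx : ∀ i, ∃ e : ℕ, H i i = (p : ℤ) ^ e := by
      intro i
      have hdv : H i i ∣ (p : ℤ) ^ n := hd ▸ Finset.dvd_prod_of_mem (fun i => H i i) (Finset.mem_univ i)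
      have h4 : (H i i).natAbs ∣ p ^ n := by
        have := Int.natAbs_dvd_natAbs.2 hdv
        simpa [Int.natAbs_pow] using this
      obtain ⟨e, _, he⟩ := (Nat.dvd_prime_pow hp).1 h4
      refine ⟨e, ?_⟩
      rw [← Int.natAbs_of_nonneg (h2 i).le, he]
      push_cast; rfl
    choose e he using hx
    refine ⟨e, ?_, ?_⟩
    · simp only [Finset.mem_piAntidiag, Finset.mem_univ, implies_true, and_true]
      simp only [he, Finset.prod_pow_eq_pow_sum] at hd
      have : p ^ (∑ i, e i) = p ^ n := by exact_mod_cast hd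
      exact Nat.pow_right_injective hp.two_le this
    · rw [mem_matSet]
      intro i j
      unfold entrySet
      rcases lt_trichotomy i j with h | h | h
      · simp [h, h1 i j h]
      · subst h; simp [he]
      · have := h3 i j h
        rw [he] at this
        simp [h, not_lt_of_gt h, this]
  · rintro ⟨e, he, hH⟩
    have hdg := diag_of_mem hH
    rw [mem_matSet] at hH
    have h1 : ∀ i j, i < j → H i j = 0 := by
      intro i j h
      have := hH i j
      simpa [entrySet, h] using this
    refine ⟨⟨h1, ?_, ?_⟩, ?_⟩
    · intro i; rw [hdg]; positivity
    · intro i j h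
      have := hH i j
      rw [hdg]
      simpa [entrySet, h, not_lt_of_gt h] using this
    · rw [hdet h1]
      simp only [hdg, Finset.prod_pow_eq_pow_sum]
      simp only [Finset.mem_piAntidiag, Finset.mem_univ, implies_true, and_true] at he
      rw [he]

theorem card_lhnf (p : ℕ) (hp : p.Prime) (n k : ℕ) :
    Nat.card {H : Matrix (Fin k) (Fin k) ℤ // LHNF H ∧ H.det = (p : ℤ) ^ n} =
      ∑ e ∈ Finset.piAntidiag (Finset.univ : Finset (Fin k)) n,
        p ^ (∑ j, e j * (k - 1 - j)) := by
  classical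
  rw [Nat.subtype_card ((Finset.piAntidiag (Finset.univ : Finset (Fin k)) n).biUnion (matSet p))]
  · rw [Finset.card_biUnion]
    · simp only [card_matSet]
    · intro e _ e' _ hne
      rw [Function.onFun, Finset.disjoint_left]
      intro H h h'
      apply hne
      funext i
      have := (diag_of_mem h i).symm.trans (diag_of_mem h' i)
      have : p ^ e i = p ^ e' i := by exact_mod_cast this
      exact Nat.pow_right_injective hp.two_le this
  · intro H
    rw [lhnf_iff p hp]
    simp

/-- Multiplicities of a tuple. -/
def mult {n k : ℕ} (f : Fin n → Fin k) (j : Fin k) : ℕ := (List.ofFn f).count j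

theorem sum_mult {n k : ℕ} (f : Fin n → Fin k) (g : Fin k → ℕ) :
    ∑ j, mult f j * g j = ∑ i, g (f i) := by
  have h : ∀ j, mult f j = ∑ i, if f i = j then 1 else 0 := by
    intro j
    unfold mult
    clear g
    induction n with
    | zero => simp
    | succ n ih =>
      rw [List.ofFn_succ, List.count_cons, Fin.sum_univ_succ, ih, add_comm]
      simp
  simp only [h, Finset.sum_mul]
  rw [Finset.sum_comm]
  simp

theorem stmt_17 (p : ℕ) (hp : p.Prime) (n k : ℕ) (hn : 0 < n) (hk : 0 < k) :
    Nat.card {H : Matrix (Fin k) (Fin k) ℤ // LHNF H ∧ H.det = (p : ℤ) ^ n} =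
      ∑ f ∈ Finset.univ.filter (fun f : Fin n → Fin k => ∀ i j, i ≤ j → f i ≤ f j),
        p ^ (n * k - ∑ i, ((f i : ℕ) + 1)) := by
  rw [card_lhnf p hp]
  symm
  refine Finset.sum_bij (fun f _ => mult f) ?_ ?_ ?_ ?_
  · intro f _
    have := sum_mult f (fun _ => 1)
    simp only [mul_one] at this
    simp [Finset.mem_piAntidiag, this]
  · intro f hf f' hf' h
    simp only [Finset.mem_filter, Finset.mem_univ, true_and] at hf hf'
    have hperm : (List.ofFn f).Perm (List.ofFn f') := by
      rw [List.perm_iff_count]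
      intro a
      exact congrFun h a
    have hs : (List.ofFn f).SortedLE := List.sortedLE_ofFn_iff.2 (fun i j => hf i j)
    have hs' : (List.ofFn f').SortedLE := List.sortedLE_ofFn_iff.2 (fun i j => hf' i j)
    exact List.ofFn_injective (hperm.eq_of_sortedLE hs hs')
  · intro e he
    simp only [Finset.mem_piAntidiag, Finset.mem_univ, implies_true, and_true] at he
    let m : Multiset (Fin k) := ∑ j, Multiset.replicate (e j) j
    let l := m.sort (· ≤ ·)
    have hl : l.length = n := by
      simp [l, m, he]
    have hc : ∀ j, l.count j = e j := by
      intro j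
      rw [← Multiset.coe_count, Multiset.sort_eq, Multiset.count_sum']
      simp [Multiset.count_replicate]
    have hs : l.SortedLE := (Multiset.pairwise_sort m (· ≤ ·)).sortedLE
    subst hl
    refine ⟨l.get, ?_, ?_⟩
    · simp only [Finset.mem_filter, Finset.mem_univ, true_and]
      intro i j hij
      exact hs.monotone_get hij
    · funext j
      rw [← hc j, mult, List.ofFn_get]
  · intro f _
    rw [sum_mult f (fun j => k - 1 - (j : ℕ))]
    congr 1
    have : ∑ i, ((f i : ℕ) + 1) + ∑ i, (k - 1 - (f i : ℕ)) = n * k := by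
      rw [← Finset.sum_add_distrib]
      rw [Finset.sum_congr rfl (g := fun _ => k) (fun i _ => by have := (f i).2; omega)]
      simp
    omega
end

section
/- Let k be a positive integer and for a positive integer m let H_k(m) denote the number of k×k integer matrices in left Hermite normal form with determinant m. Then H_k is multiplicative: if m and m′ are coprime positive integers, H_k(m·m′) = H_k(m)·H_k(m′). -/
open Matrix

/-- `H_k m`: the number of `k × k` integer matrices in left Hermite normal form with
determinant `m`. -/
noncomputable def Hcount (k : ℕ) (m : ℕ) : ℕ :=
  Nat.card {H : Matrix (Fin k) (Fin k) ℤ // LHNF H ∧ H.det = (m : ℤ)}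

lemma aux_prod {k : ℕ} (d : Fin k → ℤ) (m m' : ℕ)
    (hcop : Nat.Coprime m m') (h : ∏ i, d i = (m : ℤ) * m') :
    (∀ i, 0 < d i → d i = (Int.gcd (d i) m : ℤ) * (Int.gcd (d i) m' : ℤ)) ∧
    ((∀ i, 0 < d i) → ∏ i, (Int.gcd (d i) m : ℤ) = m) := by
  have h1 : ∀ i, 0 < d i → d i = (Int.gcd (d i) m : ℤ) * (Int.gcd (d i) m' : ℤ) := by
    intro i hi
    have hdvd : d i ∣ ((m * m' : ℕ) : ℤ) := by
      push_cast
      rw [← h]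
      exact Finset.dvd_prod_of_mem d (Finset.mem_univ i)
    obtain ⟨n, hn⟩ := Int.eq_ofNat_of_zero_le hi.le
    rw [hn] at hdvd ⊢
    have h2 : n ∣ m * m' := by exact_mod_cast hdvd
    simp only [Int.gcd_natCast_natCast]
    rw [← Nat.cast_mul, ← hcop.gcd_mul, Nat.gcd_eq_left h2]
  refine ⟨h1, fun hpos => ?_⟩
  have h3 : (∏ i, Int.gcd (d i) m) * (∏ i, Int.gcd (d i) m') = m * m' := by
    zify
    rw [← h, ← Finset.prod_mul_distrib]
    exact Finset.prod_congr rfl fun i _ => (h1 i (hpos i)).symm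
  have hg : ∀ (i : Fin k) (n : ℕ), Int.gcd (d i) n ∣ n := fun i n => by
    have := Int.gcd_dvd_right (d i) n
    exact_mod_cast this
  have h4 : Nat.Coprime (∏ i, Int.gcd (d i) m) m' :=
    Nat.Coprime.prod_left fun i _ => hcop.coprime_dvd_left (hg i m)
  have h5 : Nat.Coprime m (∏ i, Int.gcd (d i) m') :=
    Nat.Coprime.prod_right fun i _ => hcop.coprime_dvd_right (hg i m')
  have h6 : (∏ i, Int.gcd (d i) m) = m := by
    apply Nat.dvd_antisymm
    · exact h4.dvd_of_dvd_mul_right (h3 ▸ Dvd.intro _ rfl)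
    · exact h5.dvd_of_dvd_mul_right (h3 ▸ Dvd.intro _ rfl)
  exact_mod_cast h6

lemma aux_det {k : ℕ} {H : Matrix (Fin k) (Fin k) ℤ} (h : ∀ i j, i < j → H i j = 0) :
    H.det = ∏ i, H i i :=
  Matrix.det_of_lowerTriangular H fun i j hij => h i j (by simpa using hij)

/-- Reduction of a Hermite form at `n`. -/
def redMat {k : ℕ} (n : ℕ) (H : Matrix (Fin k) (Fin k) ℤ) : Matrix (Fin k) (Fin k) ℤ :=
  fun i j => if i = j then (Int.gcd (H j j) n : ℤ) else H i j % (Int.gcd (H j j) n : ℤ)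

lemma redMat_spec {k : ℕ} (m m' : ℕ) (hcop : Nat.Coprime m m')
    (H : Matrix (Fin k) (Fin k) ℤ) (hH : LHNF H ∧ H.det = (m : ℤ) * m') :
    LHNF (redMat m H) ∧ (redMat m H).det = (m : ℤ) := by
  obtain ⟨⟨h1, h2, h3⟩, hd⟩ := hH
  have hg : ∀ j, (0 : ℤ) < (Int.gcd (H j j) m : ℤ) := fun j => by
    have := Int.gcd_pos_of_ne_zero_left (m : ℤ) (h2 j).ne'
    exact_mod_cast this
  have ht : ∀ i j, i < j → redMat m H i j = 0 := by
    intro i j hij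
    simp [redMat, hij.ne, h1 i j hij]
  refine ⟨⟨ht, fun i => ?_, fun i j hij => ?_⟩, ?_⟩
  · simpa only [redMat, if_true] using hg i
  · simp only [redMat, hij.ne', if_false, if_true]
    exact ⟨Int.emod_nonneg _ (hg j).ne', Int.emod_lt_of_pos _ (hg j)⟩
  · rw [aux_det ht]
    rw [aux_det h1] at hd
    simpa [redMat] using (aux_prod _ m m' hcop hd).2 h2

lemma aux_crt (p q a b : ℤ) (hp : 0 < p) (hq : 0 < q) (h : IsCoprime p q) :
    ∃ z, 0 ≤ z ∧ z < p * q ∧ z % p = a % p ∧ z % q = b % q := by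
  obtain ⟨u, v, huv⟩ := h
  have hpq := mul_pos hp hq
  refine ⟨(a * (v * q) + b * (u * p)) % (p * q), Int.emod_nonneg _ hpq.ne',
    Int.emod_lt_of_pos _ hpq, ?_, ?_⟩
  · rw [Int.emod_emod_of_dvd _ (Dvd.intro _ rfl)]
    apply Int.ModEq.symm
    rw [Int.modEq_iff_dvd]
    exact ⟨(b - a) * u, by linear_combination a * huv⟩
  · rw [Int.emod_emod_of_dvd _ (Dvd.intro_left _ rfl)]
    apply Int.ModEq.symm
    rw [Int.modEq_iff_dvd]
    exact ⟨(a - b) * v, by linear_combination b * huv⟩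

lemma aux_gcd (a b : ℤ) (m m' : ℕ) (ha : 0 < a) (ham : a ∣ m) (hbm : b ∣ m')
    (hcop : Nat.Coprime m m') : (Int.gcd (a * b) m : ℤ) = a := by
  have hc : IsCoprime (m : ℤ) (m' : ℤ) := Nat.isCoprime_iff_coprime.2 hcop
  apply Int.dvd_antisymm (by positivity) ha.le
  · have h1 : IsCoprime ((Int.gcd (a * b) m : ℕ) : ℤ) b :=
      hc.of_isCoprime_of_dvd_left (Int.gcd_dvd_right _ _) |>.of_isCoprime_of_dvd_right hbm
    exact h1.dvd_of_dvd_mul_right (Int.gcd_dvd_left _ _)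
  · exact Int.dvd_coe_gcd (Dvd.intro _ rfl) ham

/-- The counting function `H_k` is multiplicative on coprime arguments. -/
theorem stmt_18 (k : ℕ) (hk : 0 < k) (m m' : ℕ) (hm : 0 < m) (hm' : 0 < m')
    (hcop : Nat.Coprime m m') :
    Hcount k (m * m') = Hcount k m * Hcount k m' := by
  unfold Hcount
  rw [← Nat.card_prod]
  have hc : IsCoprime (m : ℤ) (m' : ℤ) := Nat.isCoprime_iff_coprime.2 hcop
  let F : {H : Matrix (Fin k) (Fin k) ℤ // LHNF H ∧ H.det = ((m * m' : ℕ) : ℤ)} →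
      {H : Matrix (Fin k) (Fin k) ℤ // LHNF H ∧ H.det = (m : ℤ)} ×
      {H : Matrix (Fin k) (Fin k) ℤ // LHNF H ∧ H.det = (m' : ℤ)} := fun H =>
    (⟨redMat m H.1, redMat_spec m m' hcop H.1 ⟨H.2.1, by rw [H.2.2]; push_cast; ring⟩⟩,
     ⟨redMat m' H.1, redMat_spec m' m hcop.symm H.1 ⟨H.2.1, by rw [H.2.2]; push_cast; ring⟩⟩)
  refine Nat.card_congr (Equiv.ofBijective F ⟨?_, ?_⟩)
  · rintro ⟨H, ⟨h1, h2, h3⟩, hd⟩ ⟨K, ⟨k1, k2, k3⟩, kd⟩ hHK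
    simp only [F, Prod.mk.injEq, Subtype.mk.injEq] at hHK
    obtain ⟨e1, e2⟩ := hHK
    rw [aux_det h1] at hd
    rw [aux_det k1] at kd
    push_cast at hd kd
    have p1 := fun i => (aux_prod _ m m' hcop hd).1 i (h2 i)
    have p2 := fun i => (aux_prod _ m m' hcop kd).1 i (k2 i)
    have g1 : ∀ i, (Int.gcd (H i i) m : ℤ) = Int.gcd (K i i) m := fun i => by
      simpa [redMat] using congrFun (congrFun e1 i) i
    have g2 : ∀ i, (Int.gcd (H i i) m' : ℤ) = Int.gcd (K i i) m' := fun i => by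
      simpa [redMat] using congrFun (congrFun e2 i) i
    have hdiag : ∀ i, H i i = K i i := fun i => by rw [p1 i, p2 i, g1 i, g2 i]
    apply Subtype.ext
    funext i j
    change H i j = K i j
    rcases lt_trichotomy i j with hij | hij | hij
    · rw [h1 i j hij, k1 i j hij]
    · rw [hij, hdiag]
    · have q1 := congrFun (congrFun e1 i) j
      have q2 := congrFun (congrFun e2 i) j
      simp only [redMat, hij.ne', if_false, ← hdiag] at q1 q2
      have c : IsCoprime ((Int.gcd (H j j) m : ℕ) : ℤ) ((Int.gcd (H j j) m' : ℕ) : ℤ) :=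
        hc.of_isCoprime_of_dvd_left (Int.gcd_dvd_right _ _)
          |>.of_isCoprime_of_dvd_right (Int.gcd_dvd_right _ _)
      have := c.mul_dvd (Int.ModEq.dvd q1) (Int.ModEq.dvd q2)
      rw [← p1 j] at this
      have r := Int.modEq_iff_dvd.2 this
      have b1 := h3 i j hij
      have b2 := k3 i j hij
      rw [← hdiag] at b2
      rw [Int.ModEq, Int.emod_eq_of_lt b1.1 b1.2, Int.emod_eq_of_lt b2.1 b2.2] at r
      exact r
  · rintro ⟨⟨A, ⟨a1, a2, a3⟩, ad⟩, ⟨B, ⟨b1, b2, b3⟩, bd⟩⟩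
    rw [aux_det a1] at ad
    rw [aux_det b1] at bd
    have da : ∀ j, A j j ∣ m := fun j =>
      ad ▸ Finset.dvd_prod_of_mem (fun i => A i i) (Finset.mem_univ j)
    have db : ∀ j, B j j ∣ m' := fun j =>
      bd ▸ Finset.dvd_prod_of_mem (fun i => B i i) (Finset.mem_univ j)
    have c : ∀ j, IsCoprime (A j j) (B j j) := fun j =>
      hc.of_isCoprime_of_dvd_left (da j) |>.of_isCoprime_of_dvd_right (db j)
    choose z z0 z1 z2 z3 using fun i j =>
      aux_crt (A j j) (B j j) (A i j) (B i j) (a2 j) (b2 j) (c j)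
    let H : Matrix (Fin k) (Fin k) ℤ := fun i j =>
      if i < j then 0 else if i = j then A j j * B j j else z i j
    have hdiag : ∀ j, H j j = A j j * B j j := fun j => by simp [H]
    have hlow : ∀ i j, j < i → H i j = z i j := fun i j hij => by
      simp [H, hij.ne', hij.le]
    have hup : ∀ i j, i < j → H i j = 0 := fun i j hij => by simp [H, hij]
    have gA : ∀ j, (Int.gcd (H j j) m : ℤ) = A j j := fun j => by
      rw [hdiag]; exact aux_gcd _ _ m m' (a2 j) (da j) (db j) hcop
    have gB : ∀ j, (Int.gcd (H j j) m' : ℤ) = B j j := fun j => by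
      rw [hdiag, mul_comm]; exact aux_gcd _ _ m' m (b2 j) (db j) (da j) hcop.symm
    refine ⟨⟨H, ⟨hup, fun i => ?_, fun i j hij => ?_⟩, ?_⟩, ?_⟩
    · rw [hdiag]; exact mul_pos (a2 i) (b2 i)
    · rw [hlow i j hij, hdiag]; exact ⟨z0 i j, z1 i j⟩
    · rw [aux_det hup]
      simp only [hdiag, Finset.prod_mul_distrib, ad, bd]
      push_cast; rfl
    · simp only [F, Prod.mk.injEq, Subtype.mk.injEq]
      constructor
      · funext i j
        simp only [redMat, gA]
        rcases lt_trichotomy i j with hij | hij | hij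
        · simp [hij.ne, hup i j hij, a1 i j hij]
        · simp [hij]
        · rw [if_neg hij.ne', hlow i j hij, z2, Int.emod_eq_of_lt (a3 i j hij).1 (a3 i j hij).2]
      · funext i j
        simp only [redMat, gB]
        rcases lt_trichotomy i j with hij | hij | hij
        · simp [hij.ne, hup i j hij, b1 i j hij]
        · simp [hij]
        · rw [if_neg hij.ne', hlow i j hij, z3, Int.emod_eq_of_lt (b3 i j hij).1 (b3 i j hij).2]
end
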